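/- arXiv:2206.14054 — 2 statements merged into one kernel-verified Lean document; each statement's English description precedes it below -/
import Mathlib

section
/- For every real number s with -1 < s < 0, the improper integral ∫₀^∞ r^s sin(r) dr converges and equals Γ(1+s) cos(sπ/2). -/
open Real Filter intervalIntegral

/-!
For `-1 < s.re` the integral `∫₀^∞ r ^ s * exp (-z * r) dr` converges absolutely when `0 < z.re`,
where it equals `(1 / z) ^ (1 + s) * Γ(1 + s)`: this is known for real `z`, and both sides are
holomorphic in the half-plane. If also `s.re < 0`, integration by parts shows that the tail beyond
`R` is `O(R ^ s.re / ‖z‖)` uniformly in the half-plane. The resulting bound on the distance from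
`∫₀^R` to the limit extends, for fixed `R`, by continuity in `z` to the punctured boundary line;
there, `z = ± I` gives the sine integral.
-/

section HalfPlane

open MeasureTheory Set Topology

variable {s z : ℂ} {R T : ℝ}

lemma norm_cexp_neg_mul_ofReal_le_one (hz : 0 ≤ z.re) {r : ℝ} (hr : 0 ≤ r) :
    ‖Complex.exp (-(z * r))‖ ≤ 1 := by
  rw [Complex.norm_exp, Real.exp_le_one_iff, Complex.neg_re, Complex.re_mul_ofReal]
  exact neg_nonpos.2 (mul_nonneg hz hr)

lemma norm_integral_mul_cexp_neg_mul_le {u u' : ℝ → ℂ} (hz : 0 ≤ z.re) (hz0 : z ≠ 0)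
    (hR : 0 ≤ R) (hRT : R ≤ T) (hu : ∀ r ∈ uIcc R T, HasDerivAt u (u' r) r)
    (hu' : IntervalIntegrable u' volume R T) :
    ‖∫ r in R..T, u r * Complex.exp (-(z * r))‖ ≤
      (‖u T‖ + ‖u R‖ + ∫ r in R..T, ‖u' r‖) / ‖z‖ := by
  set v : ℝ → ℂ := fun r => -Complex.exp (-(z * r)) / z with hv
  have hasDerivAt_v : ∀ r ∈ uIcc R T, HasDerivAt v (Complex.exp (-(z * r))) r := fun r _ => by
    have h := (((hasDerivAt_id (r : ℂ)).const_mul z).neg.cexp.neg.div_const z).comp_ofReal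
    convert! h using 1
    simp only [id, Pi.neg_apply]
    field_simp
  have norm_mul_v_le (w : ℂ) {r : ℝ} (hr : 0 ≤ r) : ‖w * v r‖ ≤ ‖w‖ / ‖z‖ := by
    rw [hv, norm_mul, norm_div, norm_neg, mul_div_assoc']
    gcongr
    exact mul_le_of_le_one_right (norm_nonneg w) (norm_cexp_neg_mul_ofReal_le_one hz hr)
  have norm_integral_le : ‖∫ r in R..T, u' r * v r‖ ≤ (∫ r in R..T, ‖u' r‖) / ‖z‖ := by
    rw [← intervalIntegral.integral_div]
    refine norm_integral_le_of_norm_le hRT ?_ (hu'.norm.div_const _)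
    exact ae_of_all _ fun r hr => norm_mul_v_le _ (hR.trans hr.1.le)
  calc ‖∫ r in R..T, u r * Complex.exp (-(z * r))‖
      = ‖u T * v T - u R * v R - ∫ r in R..T, u' r * v r‖ := by
        rw [integral_mul_deriv_eq_deriv_mul hu hasDerivAt_v hu'
          (Continuous.intervalIntegrable (by fun_prop) _ _)]
    _ ≤ ‖u T * v T‖ + ‖u R * v R‖ + ‖∫ r in R..T, u' r * v r‖ :=
        norm_sub_le_of_le (norm_sub_le _ _) le_rfl
    _ ≤ ‖u T‖ / ‖z‖ + ‖u R‖ / ‖z‖ + (∫ r in R..T, ‖u' r‖) / ‖z‖ :=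
        add_le_add_three (norm_mul_v_le _ (hR.trans hRT)) (norm_mul_v_le _ hR) norm_integral_le
    _ = (‖u T‖ + ‖u R‖ + ∫ r in R..T, ‖u' r‖) / ‖z‖ := by ring

lemma integral_rpow_sub_one_le {σ : ℝ} (hσ : σ < 0) (hR : 0 < R) (hRT : R ≤ T) :
    ∫ r in R..T, r ^ (σ - 1) ≤ R ^ σ / -σ := by
  have h0 : (0 : ℝ) ∉ uIcc R T := notMem_uIcc_of_lt hR (hR.trans_le hRT)
  rw [integral_rpow (Or.inr ⟨by linarith, h0⟩), sub_add_cancel, ← neg_div_neg_eq, neg_sub]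
  have hT : 0 ≤ T ^ σ := rpow_nonneg (hR.le.trans hRT) σ
  gcongr
  · linarith
  · linarith

lemma norm_integral_cpow_mul_cexp_neg_mul_le (hs : s.re < 0) (hz : 0 ≤ z.re) (hz0 : z ≠ 0)
    (hR : 0 < R) (hRT : R ≤ T) :
    ‖∫ r : ℝ in R..T, (r : ℂ) ^ s * Complex.exp (-(z * r))‖ ≤
      (2 + ‖s‖ / -s.re) * R ^ s.re / ‖z‖ := by
  have hpos : ∀ r ∈ uIcc R T, 0 < r := fun r hr =>
    hR.trans_le (uIcc_of_le hRT ▸ hr).1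
  have hs0 : s ≠ 0 := fun h => hs.ne (h ▸ Complex.zero_re)
  have hderiv : ∀ r ∈ uIcc R T, HasDerivAt (fun r : ℝ => (r : ℂ) ^ s) (s * r ^ (s - 1)) r :=
    fun r hr => hasDerivAt_ofReal_cpow_const (hpos r hr).ne' hs0
  have hderiv_int : IntervalIntegrable (fun r : ℝ => s * (r : ℂ) ^ (s - 1)) volume R T :=
    (intervalIntegrable_cpow (Or.inr fun h => (hpos 0 h).false)).const_mul s
  refine (norm_integral_mul_cexp_neg_mul_le hz hz0 hR.le hRT hderiv hderiv_int).trans ?_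
  have hderiv_norm : ∫ r in R..T, ‖s * (r : ℂ) ^ (s - 1)‖ ≤ ‖s‖ * (R ^ s.re / -s.re) := by
    have hcongr : ∫ r in R..T, ‖s * (r : ℂ) ^ (s - 1)‖ = ∫ r in R..T, ‖s‖ * r ^ (s.re - 1) :=
      integral_congr fun r hr => by
        simp only [norm_mul, Complex.norm_cpow_eq_rpow_re_of_pos (hpos r hr), Complex.sub_re,
          Complex.one_re]
    rw [hcongr, intervalIntegral.integral_const_mul]
    gcongr
    exact integral_rpow_sub_one_le hs hR hRT
  rw [Complex.norm_cpow_eq_rpow_re_of_pos hR, Complex.norm_cpow_eq_rpow_re_of_pos (hR.trans_le hRT)]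
  have hT : T ^ s.re ≤ R ^ s.re := rpow_le_rpow_of_nonpos hR hRT hs.le
  gcongr
  calc T ^ s.re + R ^ s.re + ∫ r in R..T, ‖s * (r : ℂ) ^ (s - 1)‖
      ≤ R ^ s.re + R ^ s.re + ‖s‖ * (R ^ s.re / -s.re) := by gcongr
    _ = (2 + ‖s‖ / -s.re) * R ^ s.re := by ring

lemma integrableOn_cpow_mul_cexp_neg_mul_Ioi (hs : -1 < s.re) (hz : 0 < z.re) :
    IntegrableOn (fun r : ℝ => (r : ℂ) ^ s * Complex.exp (-(z * r))) (Ioi 0) := by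
  refine (integrableOn_rpow_mul_exp_neg_mul_rpow hs one_pos hz).mono'
    (by fun_prop) ?_
  filter_upwards [ae_restrict_mem measurableSet_Ioi] with r hr
  rw [norm_mul, Complex.norm_cpow_eq_rpow_re_of_pos hr, Complex.norm_exp, Complex.neg_re,
    Complex.re_mul_ofReal, rpow_one, neg_mul]

lemma differentiableAt_integral_cpow_mul_cexp_neg_mul_Ioi (hs : -1 < s.re) (hz : 0 < z.re) :
    DifferentiableAt ℂ
      (fun w : ℂ => ∫ r : ℝ in Ioi 0, (r : ℂ) ^ s * Complex.exp (-(w * r))) z := by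
  have hU : {w : ℂ | z.re / 2 < w.re} ∈ 𝓝 z :=
    (isOpen_lt continuous_const Complex.continuous_re).mem_nhds (half_lt_self hz)
  have hbound : IntegrableOn (fun r : ℝ => r ^ (s.re + 1) * Real.exp (-(z.re / 2) * r ^ (1 : ℝ)))
      (Ioi 0) :=
    integrableOn_rpow_mul_exp_neg_mul_rpow (by linarith) one_pos (half_pos hz)
  refine (_root_.hasDerivAt_integral_of_dominated_loc_of_deriv_le hU
    (F := fun (w : ℂ) (r : ℝ) => (r : ℂ) ^ s * Complex.exp (-(w * r)))
    (F' := fun w r => (r : ℂ) ^ s * (Complex.exp (-(w * r)) * -r))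
    (Eventually.of_forall fun w => by fun_prop)
    (integrableOn_cpow_mul_cexp_neg_mul_Ioi hs hz)
    (by fun_prop) ?_ hbound ?_).2.differentiableAt
  · filter_upwards [ae_restrict_mem measurableSet_Ioi] with r (hr : 0 < r) w (hw : z.re / 2 < w.re)
    rw [norm_mul, norm_mul, Complex.norm_cpow_eq_rpow_re_of_pos hr, Complex.norm_exp,
      Complex.neg_re, Complex.re_mul_ofReal, norm_neg, Complex.norm_of_nonneg hr.le,
      rpow_add_one hr.ne', rpow_one, mul_assoc, mul_comm r, neg_mul]
    gcongr
  · exact ae_of_all _ fun r w _ =>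
      (hasDerivAt_mul_const (r : ℂ)).neg.cexp.const_mul _

lemma one_div_mem_slitPlane (hz : 0 ≤ z.re) (hz0 : z ≠ 0) : 1 / z ∈ Complex.slitPlane := by
  rw [one_div, Complex.mem_slitPlane_iff, Complex.inv_re, Complex.inv_im]
  have hnormSq : 0 < Complex.normSq z := Complex.normSq_pos.2 hz0
  rcases hz.lt_or_eq with hre | hre
  · exact Or.inl (div_pos hre hnormSq)
  · have him : z.im ≠ 0 := fun h => hz0 (Complex.ext hre.symm h)
    exact Or.inr (div_ne_zero (neg_ne_zero.2 him) hnormSq.ne')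

theorem integral_cpow_mul_cexp_neg_mul_Ioi (hs : -1 < s.re) (hz : 0 < z.re) :
    ∫ r : ℝ in Ioi 0, (r : ℂ) ^ s * Complex.exp (-(z * r)) =
      (1 / z) ^ (1 + s) * Complex.Gamma (1 + s) := by
  have hopen : IsOpen {w : ℂ | 0 < w.re} := isOpen_lt continuous_const Complex.continuous_re
  have hleft : AnalyticOnNhd ℂ
      (fun w : ℂ => ∫ r : ℝ in Ioi 0, (r : ℂ) ^ s * Complex.exp (-(w * r))) {w | 0 < w.re} :=
    DifferentiableOn.analyticOnNhd (fun w hw =>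
      (differentiableAt_integral_cpow_mul_cexp_neg_mul_Ioi hs hw).differentiableWithinAt) hopen
  have hright : AnalyticOnNhd ℂ (fun w : ℂ => (1 / w) ^ (1 + s) * Complex.Gamma (1 + s))
      {w | 0 < w.re} := by
    refine DifferentiableOn.analyticOnNhd (fun w (hw : 0 < w.re) => ?_) hopen
    have hw0 : w ≠ 0 := fun h => hw.ne' (h ▸ Complex.zero_re)
    exact ((((differentiableAt_const _).div differentiableAt_id hw0).cpow_const
      (one_div_mem_slitPlane hw.le hw0)).mul_const _).differentiableWithinAt
  have hreal {x : ℝ} (hx : 0 < x) : ∫ r : ℝ in Ioi 0, (r : ℂ) ^ s * Complex.exp (-(x * r)) =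
      (1 / (x : ℂ)) ^ (1 + s) * Complex.Gamma (1 + s) := by
    rw [← Complex.integral_cpow_mul_exp_neg_mul_Ioi
      (by rw [Complex.add_re, Complex.one_re]; linarith) hx, add_sub_cancel_left]
  have hreal_frequently : ∃ᶠ w : ℂ in 𝓝[≠] ((1 : ℝ) : ℂ),
      ∫ r : ℝ in Ioi 0, (r : ℂ) ^ s * Complex.exp (-(w * r)) =
        (1 / w) ^ (1 + s) * Complex.Gamma (1 + s) := by
    refine (Complex.continuous_ofReal.continuousWithinAt.tendsto_nhdsWithin
      (s := {1}ᶜ) ?_).frequently (Eventually.frequently ?_)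
    · exact fun x hx => mt Complex.ofReal_injective.eq_iff.1 hx
    · filter_upwards [mem_nhdsWithin_of_mem_nhds (lt_mem_nhds one_pos)] with x hx using hreal hx
  exact hleft.eqOn_of_preconnected_of_frequently_eq hright
    (convex_halfSpace_re_gt 0).isPreconnected (by simp) hreal_frequently hz

lemma intervalIntegrable_cpow_mul_cexp_neg_mul (hs : -1 < s.re) (z : ℂ) (R T : ℝ) :
    IntervalIntegrable (fun r : ℝ => (r : ℂ) ^ s * Complex.exp (-(z * r))) volume R T :=
  (intervalIntegrable_cpow' hs).mul_continuousOn (by fun_prop)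

lemma continuousWithinAt_integral_cpow_mul_cexp_neg_mul (hs : -1 < s.re) (hR : 0 ≤ R) (z : ℂ) :
    ContinuousWithinAt
      (fun w : ℂ => ∫ r : ℝ in (0 : ℝ)..R, (r : ℂ) ^ s * Complex.exp (-(w * r)))
      {w | 0 < w.re} z := by
  refine continuousWithinAt_of_dominated_interval (bound := fun r => r ^ s.re)
    (Eventually.of_forall fun w => by fun_prop) ?_ (intervalIntegrable_rpow' hs)
    (ae_of_all _ fun r _ => by fun_prop)
  filter_upwards [self_mem_nhdsWithin] with w (hw : 0 < w.re)
  refine ae_of_all _ fun r hr => ?_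
  have hr0 : 0 < r := (uIoc_of_le hR ▸ hr).1
  rw [norm_mul, Complex.norm_cpow_eq_rpow_re_of_pos hr0]
  exact mul_le_of_le_one_right (rpow_nonneg hr0.le _)
    (norm_cexp_neg_mul_ofReal_le_one hw.le hr0.le)

lemma norm_sub_integral_cpow_mul_cexp_neg_mul_le_of_re_pos (hs : -1 < s.re) (hs0 : s.re < 0)
    (hz : 0 < z.re) (hR : 0 < R) :
    ‖(1 / z) ^ (1 + s) * Complex.Gamma (1 + s) -
        ∫ r : ℝ in (0 : ℝ)..R, (r : ℂ) ^ s * Complex.exp (-(z * r))‖ ≤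
      (2 + ‖s‖ / -s.re) * R ^ s.re / ‖z‖ := by
  have hlim := intervalIntegral_tendsto_integral_Ioi 0
    (integrableOn_cpow_mul_cexp_neg_mul_Ioi hs hz) tendsto_id
  rw [integral_cpow_mul_cexp_neg_mul_Ioi hs hz] at hlim
  refine le_of_tendsto (hlim.sub_const _).norm ?_
  filter_upwards [eventually_ge_atTop R] with T hRT
  rw [id, integral_interval_sub_left (intervalIntegrable_cpow_mul_cexp_neg_mul hs z 0 T)
    (intervalIntegrable_cpow_mul_cexp_neg_mul hs z 0 R)]
  exact norm_integral_cpow_mul_cexp_neg_mul_le hs0 hz.le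
    (fun h => hz.ne' (h ▸ Complex.zero_re)) hR hRT

lemma norm_sub_integral_cpow_mul_cexp_neg_mul_le (hs : -1 < s.re) (hs0 : s.re < 0)
    (hz : 0 ≤ z.re) (hz0 : z ≠ 0) (hR : 0 < R) :
    ‖(1 / z) ^ (1 + s) * Complex.Gamma (1 + s) -
        ∫ r : ℝ in (0 : ℝ)..R, (r : ℂ) ^ s * Complex.exp (-(z * r))‖ ≤
      (2 + ‖s‖ / -s.re) * R ^ s.re / ‖z‖ := by
  have hclosure : z ∈ closure {w : ℂ | 0 < w.re} := by
    rwa [Complex.closure_setOfPred_lt_re]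
  have hpow : ContinuousAt (fun w : ℂ => (1 / w) ^ (1 + s)) z :=
    (continuousAt_const.div continuousAt_id hz0).cpow continuousAt_const
      (one_div_mem_slitPlane hz hz0)
  have hright : ContinuousAt (fun w : ℂ => (2 + ‖s‖ / -s.re) * R ^ s.re / ‖w‖) z :=
    continuousAt_const.div continuous_norm.continuousAt (norm_ne_zero_iff.2 hz0)
  exact ContinuousWithinAt.closure_le hclosure
    ((hpow.mul continuousAt_const).continuousWithinAt.sub
      (continuousWithinAt_integral_cpow_mul_cexp_neg_mul hs hR.le z)).norm
    hright.continuousWithinAt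
    fun w hw => norm_sub_integral_cpow_mul_cexp_neg_mul_le_of_re_pos hs hs0 hw hR

theorem tendsto_integral_cpow_mul_cexp_neg_mul (hs : -1 < s.re) (hs0 : s.re < 0)
    (hz : 0 ≤ z.re) (hz0 : z ≠ 0) :
    Tendsto (fun R : ℝ => ∫ r : ℝ in (0 : ℝ)..R, (r : ℂ) ^ s * Complex.exp (-(z * r))) atTop
      (𝓝 ((1 / z) ^ (1 + s) * Complex.Gamma (1 + s))) := by
  have hbound : Tendsto (fun R : ℝ => (2 + ‖s‖ / -s.re) * R ^ s.re / ‖z‖) atTop (𝓝 0) := by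
    simpa using ((tendsto_rpow_neg_atTop (neg_pos.2 hs0)).const_mul (2 + ‖s‖ / -s.re)).div_const ‖z‖
  rw [tendsto_iff_norm_sub_tendsto_zero]
  refine squeeze_zero' (Eventually.of_forall fun R => norm_nonneg _) ?_ hbound
  filter_upwards [eventually_gt_atTop 0] with R hR
  rw [norm_sub_rev]
  exact norm_sub_integral_cpow_mul_cexp_neg_mul_le hs hs0 hz hz0 hR

end HalfPlane

lemma one_div_I_cpow_sub_one_div_neg_I_cpow_mul (s : ℂ) :
    ((1 / Complex.I) ^ (1 + s) - (1 / -Complex.I) ^ (1 + s)) * (Complex.I / 2) =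
      Complex.cos (s * π / 2) := by
  have hI : 1 / Complex.I = -Complex.I := by rw [one_div, Complex.inv_I]
  have hnegI : 1 / -Complex.I = Complex.I := by rw [← hI, one_div_one_div]
  rw [hI, hnegI, Complex.cpow_def_of_ne_zero (neg_ne_zero.2 Complex.I_ne_zero),
    Complex.cpow_def_of_ne_zero Complex.I_ne_zero, Complex.log_neg_I, Complex.log_I,
    ← Complex.sin_add_pi_div_two, Complex.sin]
  ring_nf

theorem improper_integral_rpow_sin_general (s : ℂ) (hs1 : -1 < s.re) (hs0 : s.re < 0) :
    Tendsto (fun R : ℝ => ∫ r : ℝ in (0 : ℝ)..R, (r : ℂ) ^ s * Complex.sin r) atTop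
      (nhds (Complex.Gamma (1 + s) * Complex.cos (s * π / 2))) := by
  have hI := tendsto_integral_cpow_mul_cexp_neg_mul hs1 hs0 (z := Complex.I) (by simp) (by simp)
  have hnegI := tendsto_integral_cpow_mul_cexp_neg_mul hs1 hs0 (z := -Complex.I) (by simp) (by simp)
  have hsub := (hI.sub hnegI).mul_const (Complex.I / 2)
  rw [← sub_mul, mul_right_comm, one_div_I_cpow_sub_one_div_neg_I_cpow_mul, mul_comm] at hsub
  refine hsub.congr fun R => ?_
  rw [← integral_sub (intervalIntegrable_cpow_mul_cexp_neg_mul hs1 _ _ _)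
    (intervalIntegrable_cpow_mul_cexp_neg_mul hs1 _ _ _), ← integral_mul_const]
  refine integral_congr fun r _ => ?_
  simp only [Complex.sin]
  ring_nf

lemma integral_ofReal_cpow_mul_sin (s : ℝ) {R : ℝ} (hR : 0 ≤ R) :
    ∫ r : ℝ in (0 : ℝ)..R, (r : ℂ) ^ (s : ℂ) * Complex.sin r =
      ((∫ r in (0 : ℝ)..R, r ^ s * Real.sin r : ℝ) : ℂ) := by
  rw [← intervalIntegral.integral_ofReal]
  refine integral_congr fun r hr => ?_
  have hr0 : 0 ≤ r := (Set.uIcc_of_le hR ▸ hr).1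
  simp only [Complex.ofReal_mul, Complex.ofReal_cpow hr0, Complex.ofReal_sin]

theorem improper_integral_rpow_sin (s : ℝ) (hs1 : -1 < s) (hs0 : s < 0) :
    Tendsto (fun R : ℝ => ∫ r in (0:ℝ)..R, r ^ s * Real.sin r) atTop
      (nhds (Real.Gamma (1 + s) * Real.cos (s * π / 2))) := by
  have h := (improper_integral_rpow_sin_general s hs1 hs0).congr' <|
    (eventually_ge_atTop 0).mono fun R hR => integral_ofReal_cpow_mul_sin s hR
  exact tendsto_ofReal_iff.1 (by simpa [← Complex.Gamma_ofReal] using h)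
end

section
/- Let 0 < s < 1 and let 𝒞_s = 2cos(sπ/2)/(s(s+1)π). The probability density ρ₁(x) = C₁ (R₁² − x²)_+^{(1+s)/2} on ℝ, with R₁ = (𝒞_s β(1/2,(3+s)/2))^{-1/(s+2)} and C₁ a normalizing constant, generates a potential satisfying: ((|·|^{-s} + |·|²) * ρ₁)(y) is constant for y ∈ [−R₁, R₁] and strictly larger than that constant for |y| > R₁. -/
open Real MeasureTheory

/-!
By scaling, the theorem concerns the potential `U` of the weight `w x = (1 - x ^ 2) ^ ((1 + s) / 2)`
on `[-1, 1]` for the kernel `r ^ (-s)`.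

For `|y| < 1`, substitute for `x` the abscissa of the point where a line through `(y, 0)` meets the
unit semicircle, parametrized by the inverse slope `t` of the line. Because the exponent of `w` is
exactly `(1 + s) / 2`, the integrand becomes `|t| ^ (-s)` times a function of `t` that does not
depend on `s`, and adding the values of this function at `t` and `-t` cancels its square roots. What
remains is `|t| ^ (-s)` times a rational function, whose integral is given by Beta functions: `U` is
an explicit multiple of `1 - s * y ^ 2` on `[-1, 1]`.

For `y > 1`, the convex function `r ^ (-s)` lies above its tangent at `r = 1 - x`. Integrating
against `w` shows that `U y` is at least the value at `y` of the tangent line at `1` to the same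
quadratic polynomial; as this polynomial is strictly concave, the tangent line lies strictly above
it.

Finally, the radius `R₁` is the one for which the quadratic term of `U` is cancelled by the
confining potential `|·| ^ 2 * ρ₁`, itself a constant plus a multiple of `y ^ 2` since `ρ₁` is even.
-/

section BetaFunction

open ProbabilityTheory (beta beta_eq_betaIntegralReal)

variable {a b : ℝ}

lemma beta_swap (a b : ℝ) : beta b a = beta a b := by
  rw [beta, beta, mul_comm, add_comm]

lemma beta_add_one_left (ha : a ≠ 0) (hab : a + b ≠ 0) :
    beta (a + 1) b = a / (a + b) * beta a b := by
  rw [beta, beta, add_right_comm, Gamma_add_one ha, Gamma_add_one hab, mul_assoc,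
    mul_div_mul_comm]

lemma beta_one_add_half_one_sub_half (s : ℝ) :
    beta ((1 + s) / 2) ((1 - s) / 2) = π / cos (s * π / 2) := by
  have h := Gamma_mul_Gamma_one_sub ((1 + s) / 2)
  rw [show 1 - (1 + s) / 2 = (1 - s) / 2 by ring,
    show π * ((1 + s) / 2) = s * π / 2 + π / 2 by ring, sin_add_pi_div_two] at h
  rw [beta, ← add_div, add_add_sub_cancel, one_add_one_eq_two, div_self two_ne_zero, Gamma_one,
    div_one, h]

lemma beta_three_add_half_one_sub_half {s : ℝ} (hs : -1 < s) :
    beta ((3 + s) / 2) ((1 - s) / 2) = (1 + s) / 2 * (π / cos (s * π / 2)) := by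
  rw [show (3 + s) / 2 = (1 + s) / 2 + 1 by ring,
    beta_add_one_left (by linarith) (by linarith), beta_one_add_half_one_sub_half]
  ring

lemma beta_three_add_half_three_sub_half {s : ℝ} (hs : -1 < s) (hs' : s < 1) :
    beta ((3 + s) / 2) ((3 - s) / 2) = (1 - s ^ 2) / 8 * (π / cos (s * π / 2)) := by
  rw [← beta_swap, show (3 - s) / 2 = (1 - s) / 2 + 1 by ring,
    beta_add_one_left (by linarith) (by linarith), beta_swap,
    beta_three_add_half_one_sub_half hs]
  ring

lemma beta_five_add_half_one_sub_half {s : ℝ} (hs : -1 < s) :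
    beta ((5 + s) / 2) ((1 - s) / 2) = (1 + s) * (3 + s) / 8 * (π / cos (s * π / 2)) := by
  rw [show (5 + s) / 2 = (3 + s) / 2 + 1 by ring,
    beta_add_one_left (by linarith) (by linarith), beta_three_add_half_one_sub_half hs]
  ring

lemma integral_rpow_mul_one_sub_rpow (ha : 0 < a) (hb : 0 < b) :
    ∫ x in (0 : ℝ)..1, x ^ (a - 1) * (1 - x) ^ (b - 1) = beta a b := by
  suffices Complex.betaIntegral a b = (∫ x in (0 : ℝ)..1, x ^ (a - 1) * (1 - x) ^ (b - 1) : ℝ) by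
    rw [beta_eq_betaIntegralReal a b ha hb, this, Complex.ofReal_re]
  rw [Complex.betaIntegral, ← intervalIntegral.integral_ofReal]
  refine intervalIntegral.integral_congr fun x hx ↦ ?_
  rw [Set.uIcc_of_le zero_le_one] at hx
  push_cast [Complex.ofReal_cpow hx.1, Complex.ofReal_cpow (sub_nonneg.2 hx.2)]
  rfl

lemma integral_one_add_rpow_mul_one_sub_rpow (ha : 0 < a) (hb : 0 < b) :
    ∫ x in (-1 : ℝ)..1, (1 + x) ^ (a - 1) * (1 - x) ^ (b - 1) = 2 ^ (a + b - 1) * beta a b := by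
  have hsubst := intervalIntegral.integral_comp_mul_sub (a := 0) (b := 1)
    (fun x : ℝ ↦ (1 + x) ^ (a - 1) * (1 - x) ^ (b - 1)) (two_ne_zero (α := ℝ)) 1
  have hscale : ∫ p in (0 : ℝ)..1, (1 + (2 * p - 1)) ^ (a - 1) * (1 - (2 * p - 1)) ^ (b - 1) =
      2 ^ (a + b - 2) * beta a b := by
    rw [← integral_rpow_mul_one_sub_rpow ha hb, ← intervalIntegral.integral_const_mul]
    refine intervalIntegral.integral_congr fun p hp ↦ ?_
    rw [Set.uIcc_of_le zero_le_one] at hp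
    rw [show 1 + (2 * p - 1) = 2 * p by ring, show 1 - (2 * p - 1) = 2 * (1 - p) by ring,
      mul_rpow two_pos.le hp.1, mul_rpow two_pos.le (sub_nonneg.2 hp.2),
      show a + b - 2 = a - 1 + (b - 1) by ring, rpow_add two_pos]
    ring
  rw [hscale] at hsubst
  norm_num at hsubst
  rw [show a + b - 1 = 1 + (a + b - 2) by ring, rpow_add two_pos, rpow_one]
  linarith

lemma integral_one_sub_rpow_mul_one_sub_sq_rpow (ha : -1 < a) (hab : -1 < a + b) :
    ∫ x in (-1 : ℝ)..1, (1 - x) ^ b * (1 - x ^ 2) ^ a =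
      2 ^ (2 * a + b + 1) * beta (a + 1) (a + b + 1) := by
  have h := integral_one_add_rpow_mul_one_sub_rpow (a := a + 1) (b := a + b + 1)
    (by linarith) (by linarith)
  rw [show a + 1 + (a + b + 1) - 1 = 2 * a + b + 1 by ring] at h
  rw [← h]
  refine intervalIntegral.integral_congr_Ioo_of_le (by norm_num) fun x hx ↦ ?_
  have hadd : 0 < 1 + x := by linarith [hx.1]
  have hsub : 0 < 1 - x := by linarith [hx.2]
  rw [show 1 - x ^ 2 = (1 + x) * (1 - x) by ring, mul_rpow hadd.le hsub.le,
    show a + b + 1 - 1 = a + b by ring, rpow_add hsub, add_sub_cancel_right]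
  ring

lemma integral_one_sub_sq_rpow (ha : -1 < a) :
    ∫ x in (-1 : ℝ)..1, (1 - x ^ 2) ^ a = beta (1 / 2) (a + 1) := by
  have h := integral_one_sub_rpow_mul_one_sub_sq_rpow (b := 0) ha (by linarith)
  simp only [rpow_zero, one_mul, add_zero] at h
  have hdup := Gamma_mul_Gamma_add_half (a + 1)
  have hpow : (2 : ℝ) ^ (2 * a + 1) * 2 ^ (1 - 2 * (a + 1)) = 1 := by
    rw [← rpow_add two_pos]; ring_nf; exact rpow_zero 2
  have hΓ : Gamma (1 / 2 + (a + 1)) ≠ 0 := (Gamma_pos_of_pos (by linarith)).ne'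
  have hΓ' : Gamma (2 * (a + 1)) ≠ 0 := (Gamma_pos_of_pos (by linarith)).ne'
  rw [add_comm (a + 1) (1 / 2)] at hdup
  rw [h, beta, beta, Gamma_one_half_eq, ← two_mul, ← mul_div_assoc, div_eq_div_iff hΓ' hΓ]
  linear_combination 2 ^ (2 * a + 1) * Gamma (a + 1) * hdup +
    Gamma (2 * (a + 1)) * √π * Gamma (a + 1) * hpow

lemma integral_rpow_mul_one_add_rpow_neg (ha : 0 < a) (hb : 0 < b) :
    ∫ u in Set.Ioi (0 : ℝ), u ^ (a - 1) * (1 + u) ^ (-(a + b)) = beta a b := by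
  have himage : (fun u : ℝ ↦ u / (1 + u)) '' Set.Ioi 0 = Set.Ioo 0 1 := by
    ext x
    constructor
    · rintro ⟨u, hu : 0 < u, rfl⟩
      exact ⟨by positivity, (div_lt_one (by positivity)).2 (by linarith)⟩
    · rintro ⟨hx, hx'⟩
      have hsub : 0 < 1 - x := by linarith
      exact ⟨x / (1 - x), div_pos hx hsub, by field_simp; ring⟩
  have hderiv : ∀ u ∈ Set.Ioi (0 : ℝ),
      HasDerivWithinAt (fun u : ℝ ↦ u / (1 + u)) (1 / (1 + u) ^ 2) (Set.Ioi 0) u := by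
    intro u (hu : 0 < u)
    refine ((hasDerivAt_id u).div ((hasDerivAt_id u).const_add 1)
      (by simp only [id]; positivity)).hasDerivWithinAt.congr_deriv ?_
    simp
  have hinj : Set.InjOn (fun u : ℝ ↦ u / (1 + u)) (Set.Ioi 0) := by
    intro u (hu : 0 < u) v (hv : 0 < v) (huv : u / (1 + u) = v / (1 + v))
    field_simp at huv
    linarith
  rw [← integral_rpow_mul_one_sub_rpow ha hb, intervalIntegral.integral_of_le zero_le_one,
    integral_Ioc_eq_integral_Ioo, ← himage,
    integral_image_eq_integral_abs_deriv_smul measurableSet_Ioi hderiv hinj]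
  refine setIntegral_congr_fun measurableSet_Ioi fun u (hu : 0 < u) ↦ ?_
  have hadd : 0 < 1 + u := by positivity
  simp only [smul_eq_mul]
  rw [show 1 - u / (1 + u) = (1 + u)⁻¹ by field_simp; ring, abs_of_pos (by positivity),
    div_rpow hu.le hadd.le, inv_rpow hadd.le, show -(a + b) = -2 - (a - 1) - (b - 1) by ring,
    rpow_sub hadd, rpow_sub hadd, rpow_neg hadd.le, rpow_two]
  field_simp

lemma integral_rpow_mul_one_add_sq_rpow_neg (ha : 0 < a) (hb : 0 < b) :
    ∫ t in Set.Ioi (0 : ℝ), t ^ (2 * a - 1) * (1 + t ^ 2) ^ (-(a + b)) = beta a b / 2 := by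
  have hsubst := integral_comp_rpow_Ioi_of_pos
    (g := fun u : ℝ ↦ u ^ (a - 1) * (1 + u) ^ (-(a + b))) two_pos
  rw [← integral_rpow_mul_one_add_rpow_neg ha hb, ← hsubst,
    eq_div_iff two_ne_zero, mul_comm, ← integral_const_mul]
  refine setIntegral_congr_fun measurableSet_Ioi fun t (ht : 0 < t) ↦ ?_
  simp only [smul_eq_mul]
  rw [← rpow_two, ← rpow_mul ht.le, show 2 * a - 1 = (2 - 1) + 2 * (a - 1) by ring, rpow_add ht]
  ring

lemma integral_rpow_div_one_add_sq_pow {r : ℝ} {n : ℕ} (hr : -1 < r) (hn : r + 1 < 2 * n) :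
    ∫ t in Set.Ioi (0 : ℝ), t ^ r / (1 + t ^ 2) ^ n =
      beta ((r + 1) / 2) (n - (r + 1) / 2) / 2 := by
  rw [← integral_rpow_mul_one_add_sq_rpow_neg (by linarith) (by linarith)]
  refine setIntegral_congr_fun measurableSet_Ioi fun t _ ↦ ?_
  have hadd : (0 : ℝ) ≤ 1 + t ^ 2 := by positivity
  rw [mul_div_cancel₀ _ two_ne_zero, add_sub_cancel_right, add_sub_cancel, rpow_neg hadd,
    rpow_natCast, div_eq_mul_inv]

end BetaFunction

section Integration

lemma integral_add_comp_neg_of_nonneg {f : ℝ → ℝ} (hf : AEStronglyMeasurable f) (hf0 : 0 ≤ f) :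
    ∫ t, (f t + f (-t)) = 2 * ∫ t, f t := by
  by_cases hint : Integrable f
  · rw [integral_add hint hint.comp_neg, integral_neg_eq_self f volume, two_mul]
  · have hsum : ¬ Integrable fun t ↦ f t + f (-t) := fun h ↦ hint <| h.mono' hf <|
      .of_forall fun t ↦ by
        rw [norm_of_nonneg (hf0 t)]
        exact le_add_of_nonneg_right (hf0 (-t))
    rw [integral_undef hint, integral_undef hsum, mul_zero]

lemma integral_sub_sq_mul_of_even {a : ℝ} {w : ℝ → ℝ} (hw : IntervalIntegrable w volume (-a) a)
    (heven : w.Even) (y : ℝ) :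
    ∫ x in (-a)..a, (y - x) ^ 2 * w x =
      y ^ 2 * (∫ x in (-a)..a, w x) + ∫ x in (-a)..a, x ^ 2 * w x := by
  have hodd : ∫ x in (-a)..a, x * w x = 0 := by
    have h := intervalIntegral.integral_comp_neg (a := -a) (b := a) fun x ↦ x * w x
    simp only [heven _, neg_mul, intervalIntegral.integral_neg, neg_neg] at h
    linarith
  have hpoly {p : ℝ → ℝ} (hp : Continuous p) :
      IntervalIntegrable (fun x ↦ p x * w x) volume (-a) a := hw.continuousOn_mul hp.continuousOn
  have hx : IntervalIntegrable (fun x ↦ x * w x) volume (-a) a := hpoly continuous_id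
  calc ∫ x in (-a)..a, (y - x) ^ 2 * w x
      = ∫ x in (-a)..a, (y ^ 2 * w x - 2 * y * (x * w x) + x ^ 2 * w x) := by
        congr 1; ext x; ring
    _ = _ := by
        rw [intervalIntegral.integral_add ((hw.const_mul _).sub (hx.const_mul _))
            (hpoly (continuous_pow 2)),
          intervalIntegral.integral_sub (hw.const_mul _) (hx.const_mul _),
          intervalIntegral.integral_const_mul, intervalIntegral.integral_const_mul, hodd]
        ring

lemma integral_mul_max_sq_sub_sq_rpow (f : ℝ → ℝ) {R a : ℝ} (hR : 0 < R) (ha : 0 < a) :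
    ∫ x, f x * max (R ^ 2 - x ^ 2) 0 ^ a =
      R ^ (2 * a + 1) * ∫ x in (-1 : ℝ)..1, f (R * x) * (1 - x ^ 2) ^ a := by
  have hsupp : ∀ x ∉ Set.Ioc (-R) R, f x * max (R ^ 2 - x ^ 2) 0 ^ a = 0 := by
    intro x hx
    have hle : R ^ 2 ≤ x ^ 2 := by
      by_contra! h
      obtain ⟨h₁, h₂⟩ := abs_lt_of_sq_lt_sq' h hR.le
      exact hx ⟨h₁, h₂.le⟩
    rw [max_eq_right (by linarith), zero_rpow ha.ne', mul_zero]
  have hscale := intervalIntegral.smul_integral_comp_mul_left (a := -1) (b := 1)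
    (fun x ↦ f x * max (R ^ 2 - x ^ 2) 0 ^ a) R
  rw [mul_neg_one, mul_one] at hscale
  have hweight : ∫ x in (-1 : ℝ)..1, f (R * x) * max (R ^ 2 - (R * x) ^ 2) 0 ^ a =
      R ^ (2 * a) * ∫ x in (-1 : ℝ)..1, f (R * x) * (1 - x ^ 2) ^ a := by
    rw [← intervalIntegral.integral_const_mul]
    refine intervalIntegral.integral_congr fun x hx ↦ ?_
    rw [Set.uIcc_of_le (by norm_num)] at hx
    have hx2 : 0 ≤ 1 - x ^ 2 := by nlinarith [hx.1, hx.2]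
    rw [show R ^ 2 - (R * x) ^ 2 = R ^ 2 * (1 - x ^ 2) by ring, max_eq_left (by positivity),
      mul_rpow (by positivity) hx2, ← rpow_two, ← rpow_mul hR.le]
    ring
  rw [← setIntegral_eq_integral_of_forall_compl_eq_zero hsupp,
    ← intervalIntegral.integral_of_le (by linarith), ← hscale, hweight, smul_eq_mul,
    rpow_add_one hR.ne']
  ring

lemma intervalIntegrable_abs_sub_rpow {r : ℝ} (hr : -1 < r) (y a b : ℝ) :
    IntervalIntegrable (fun x ↦ |y - x| ^ r) volume a b := by
  have hloc : LocallyIntegrable fun x : ℝ ↦ |x| ^ r :=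
    locallyIntegrable_of_norm_le_rpow (C := 1) (α := -r) (by simp)
      (by rw [Module.finrank_self]; push_cast; linarith)
      (.of_forall fun x ↦ by simp [abs_of_nonneg (rpow_nonneg (abs_nonneg x) r)])
      (Measurable.aestronglyMeasurable (by fun_prop))
  have h : IntervalIntegrable (fun x : ℝ ↦ |x| ^ r) volume (y - a) (y - b) :=
    (hloc.integrableOn_isCompact isCompact_uIcc).intervalIntegrable
  simpa only [sub_sub_cancel] using h.comp_sub_left y

end Integration

lemma rpow_neg_sub_le_rpow_neg_add {s d h : ℝ} (hs : 0 ≤ s) (hd : 0 < d) (hh : 0 ≤ h) :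
    d ^ (-s) - s * h * d ^ (-s - 1) ≤ (d + h) ^ (-s) := by
  have hpos : 0 < 1 + h / d := by positivity
  have hbernoulli : 1 - s * (h / d) ≤ (1 + h / d) ^ (-s) := by
    have hlog : log (1 + h / d) ≤ h / d := by linarith [log_le_sub_one_of_pos hpos]
    rw [rpow_def_of_pos hpos]
    nlinarith [add_one_le_exp (log (1 + h / d) * -s)]
  calc d ^ (-s) - s * h * d ^ (-s - 1) = d ^ (-s) * (1 - s * (h / d)) := by
        rw [rpow_sub_one hd.ne']; ring
    _ ≤ d ^ (-s) * (1 + h / d) ^ (-s) := by gcongr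
    _ = (d + h) ^ (-s) := by rw [← mul_rpow hd.le hpos.le]; congr 1; field_simp

section Chord

/-- The height at which the line `x = y + t * h` through the point `(y, 0)` of the diameter meets
the unit semicircle `x ^ 2 + h ^ 2 = 1`, `0 < h`. The parameter is the inverse slope of the line, so
that `t ↦ y + t * chordHeight y t` maps the real line onto `(-1, 1)` when `|y| < 1`. -/
noncomputable def chordHeight (y t : ℝ) : ℝ :=
  (√(1 - y ^ 2 + t ^ 2) - y * t) / (1 + t ^ 2)

variable {y : ℝ}

lemma one_sub_sq_add_sq_pos (hy : |y| < 1) (t : ℝ) : 0 < 1 - y ^ 2 + t ^ 2 := by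
  have hy2 : y ^ 2 < 1 := (sq_lt_one_iff_abs_lt_one y).2 hy
  nlinarith [sq_nonneg t]

lemma chordHeight_pos (hy : |y| < 1) (t : ℝ) : 0 < chordHeight y t := by
  have hy2 : y ^ 2 < 1 := (sq_lt_one_iff_abs_lt_one y).2 hy
  have hlt : y * t < √(1 - y ^ 2 + t ^ 2) := lt_sqrt_of_sq_lt (by nlinarith [sq_nonneg t])
  exact div_pos (sub_pos.2 hlt) (by positivity)

lemma one_sub_sq_add_mul_chordHeight (hy : |y| < 1) (t : ℝ) :
    1 - (y + t * chordHeight y t) ^ 2 = chordHeight y t ^ 2 := by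
  have hsq := sq_sqrt (one_sub_sq_add_sq_pos hy t).le
  rw [chordHeight]
  field_simp
  linear_combination -(1 + t ^ 2) * hsq

lemma hasDerivAt_add_mul_chordHeight (hy : |y| < 1) (t : ℝ) :
    HasDerivAt (fun t ↦ y + t * chordHeight y t)
      (chordHeight y t ^ 2 / √(1 - y ^ 2 + t ^ 2)) t := by
  have hpos := one_sub_sq_add_sq_pos hy t
  have hsqrt := sqrt_pos.2 hpos
  have hsq := sq_sqrt hpos.le
  have h := ((hasDerivAt_id t).mul (((((hasDerivAt_pow 2 t).const_add (1 - y ^ 2)).sqrt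
    hpos.ne').sub ((hasDerivAt_id t).const_mul y)).div ((hasDerivAt_pow 2 t).const_add 1)
    (by positivity))).const_add y
  refine h.congr_deriv ?_
  simp only [chordHeight, id, Pi.sub_apply, Pi.div_apply]
  set q := √(1 - y ^ 2 + t ^ 2)
  push_cast
  field_simp
  linear_combination (-t ^ 2) * hsq

lemma exists_add_mul_chordHeight_eq (hy : |y| < 1) {x : ℝ} (hx : |x| < 1) :
    ∃ t, y + t * chordHeight y t = x := by
  have hx2 : 0 < 1 - x ^ 2 := sub_pos.2 ((sq_lt_one_iff_abs_lt_one x).2 hx)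
  have hxy : 0 < 1 - x * y := by
    have := abs_lt.1 (abs_mul x y ▸ mul_lt_one_of_nonneg_of_lt_one_left (abs_nonneg x) hx hy.le)
    linarith [this.2]
  set r := √(1 - x ^ 2)
  have hr : 0 < r := sqrt_pos.2 hx2
  have hr2 : r ^ 2 = 1 - x ^ 2 := sq_sqrt hx2.le
  have hsqrt : √(1 - y ^ 2 + ((x - y) / r) ^ 2) = (1 - x * y) / r := by
    rw [sqrt_eq_iff_mul_self_eq (one_sub_sq_add_sq_pos hy _).le (by positivity)]
    field_simp
    linear_combination (1 - y ^ 2) * hr2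
  refine ⟨(x - y) / r, ?_⟩
  have hheight : chordHeight y ((x - y) / r) = r := by
    rw [chordHeight, hsqrt, div_eq_iff (by positivity)]
    field_simp
    linear_combination -hr2
  rw [hheight]
  field_simp
  ring

lemma range_add_mul_chordHeight (hy : |y| < 1) :
    Set.range (fun t ↦ y + t * chordHeight y t) = Set.Ioo (-1) 1 := by
  refine Set.Subset.antisymm (Set.range_subset_iff.2 fun t ↦ ?_) fun x hx ↦
    exists_add_mul_chordHeight_eq hy (abs_lt.2 hx)
  have hheight : 0 < chordHeight y t ^ 2 := pow_pos (chordHeight_pos hy t) 2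
  rw [← one_sub_sq_add_mul_chordHeight hy t, sub_pos] at hheight
  exact abs_lt.1 ((sq_lt_one_iff_abs_lt_one _).1 hheight)

lemma integral_eq_integral_chordHeight (hy : |y| < 1) (f : ℝ → ℝ) :
    ∫ x in (-1 : ℝ)..1, f x =
      ∫ t, chordHeight y t ^ 2 / √(1 - y ^ 2 + t ^ 2) * f (y + t * chordHeight y t) := by
  have hderiv_pos (t : ℝ) : 0 < chordHeight y t ^ 2 / √(1 - y ^ 2 + t ^ 2) :=
    div_pos (pow_pos (chordHeight_pos hy t) 2) (sqrt_pos.2 (one_sub_sq_add_sq_pos hy t))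
  have hmono := strictMono_of_hasDerivAt_pos (hasDerivAt_add_mul_chordHeight hy) hderiv_pos
  rw [intervalIntegral.integral_of_le (by norm_num), integral_Ioc_eq_integral_Ioo,
    ← range_add_mul_chordHeight hy, ← Set.image_univ,
    integral_image_eq_integral_abs_deriv_smul .univ
      (fun t _ ↦ (hasDerivAt_add_mul_chordHeight hy t).hasDerivWithinAt) hmono.injective.injOn,
    setIntegral_univ]
  simp only [abs_of_pos (hderiv_pos _), smul_eq_mul]

lemma chordHeight_pow_three_add_neg (hy : |y| < 1) (t : ℝ) :
    chordHeight y t ^ 3 / √(1 - y ^ 2 + t ^ 2) + chordHeight y (-t) ^ 3 / √(1 - y ^ 2 + (-t) ^ 2) =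
      2 * ((1 - y ^ 2) + (1 + 3 * y ^ 2) * t ^ 2) / (1 + t ^ 2) ^ 3 := by
  have hpos := one_sub_sq_add_sq_pos hy t
  have hsqrt := sqrt_pos.2 hpos
  have hsq := sq_sqrt hpos.le
  simp only [chordHeight, neg_sq]
  set q := √(1 - y ^ 2 + t ^ 2)
  field_simp
  linear_combination 2 * q * hsq

end Chord

section RieszPotential

open ProbabilityTheory (beta beta_pos)

/-- The Riesz potential `|·| ^ (-s) * w` of the weight `w x = (1 - x ^ 2) ^ ((1 + s) / 2)` on
`[-1, 1]`, that is, of the unnormalized density `ρ₁` rescaled to the unit interval. -/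
noncomputable def rieszPotential (s y : ℝ) : ℝ :=
  ∫ x in (-1 : ℝ)..1, |y - x| ^ (-s) * (1 - x ^ 2) ^ ((1 + s) / 2)

variable {s y : ℝ}

lemma rieszPotential_abs (s y : ℝ) : rieszPotential s |y| = rieszPotential s y := by
  rcases abs_choice y with h | h
  · rw [h]
  · rw [h, rieszPotential, rieszPotential]
    have hneg := intervalIntegral.integral_comp_neg (a := -1) (b := 1)
      fun x ↦ |(-y) - x| ^ (-s) * (1 - x ^ 2) ^ ((1 + s) / 2)
    rw [neg_neg] at hneg
    rw [← hneg]
    congr 1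
    ext x
    rw [neg_sq, show -y - -x = -(y - x) by ring, abs_neg]

lemma rieszPotential_eq_integral_chordHeight (hy : |y| < 1) :
    rieszPotential s y =
      ∫ t, |t| ^ (-s) * (chordHeight y t ^ 3 / √(1 - y ^ 2 + t ^ 2)) := by
  rw [rieszPotential, integral_eq_integral_chordHeight hy]
  congr 1
  ext t
  have hc := chordHeight_pos hy t
  rw [one_sub_sq_add_mul_chordHeight hy, sub_add_cancel_left, abs_neg, abs_mul, abs_of_pos hc,
    mul_rpow (abs_nonneg t) hc.le, ← rpow_two, ← rpow_mul hc.le,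
    show (2 : ℝ) * ((1 + s) / 2) = 1 + s by ring, rpow_add hc, rpow_one, rpow_neg hc.le, rpow_two]
  field_simp

lemma cos_mul_pi_div_two_pos (hs : -1 < s) (hs' : s < 1) : 0 < cos (s * π / 2) :=
  cos_pos_of_mem_Ioo ⟨by nlinarith [pi_pos], by nlinarith [pi_pos]⟩

lemma integral_abs_rpow_neg_mul_div_one_add_sq_pow_three (hs : -1 < s) (hs' : s < 1) (p q : ℝ) :
    ∫ t : ℝ, |t| ^ (-s) * ((p + q * t ^ 2) / (1 + t ^ 2) ^ 3) =
      (1 + s) / 8 * (π / cos (s * π / 2)) * (p * (3 + s) + q * (1 - s)) := by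
  have hM : 0 < π / cos (s * π / 2) := div_pos pi_pos (cos_mul_pi_div_two_pos hs hs')
  have hp : ∫ t in Set.Ioi (0 : ℝ), t ^ (-s) / (1 + t ^ 2) ^ 3 =
      (1 + s) * (3 + s) / 16 * (π / cos (s * π / 2)) := by
    rw [integral_rpow_div_one_add_sq_pow (by linarith) (by push_cast; linarith), beta_swap,
      show (3 : ℕ) - (-s + 1) / 2 = (5 + s) / 2 by push_cast; ring,
      show (-s + 1) / 2 = (1 - s) / 2 by ring, beta_five_add_half_one_sub_half hs]
    ring
  have hq : ∫ t in Set.Ioi (0 : ℝ), t ^ (2 - s) / (1 + t ^ 2) ^ 3 =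
      (1 - s ^ 2) / 16 * (π / cos (s * π / 2)) := by
    rw [integral_rpow_div_one_add_sq_pow (by linarith) (by push_cast; linarith), beta_swap,
      show (3 : ℕ) - (2 - s + 1) / 2 = (3 + s) / 2 by push_cast; ring,
      show (2 - s + 1) / 2 = (3 - s) / 2 by ring, beta_three_add_half_three_sub_half hs hs']
    ring
  have hp_int : IntegrableOn (fun t : ℝ ↦ t ^ (-s) / (1 + t ^ 2) ^ 3) (Set.Ioi 0) :=
    .of_integral_ne_zero <| hp ▸ (mul_pos (by nlinarith) hM).ne'
  have hq_int : IntegrableOn (fun t : ℝ ↦ t ^ (2 - s) / (1 + t ^ 2) ^ 3) (Set.Ioi 0) :=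
    .of_integral_ne_zero <| hq ▸ (mul_pos (by nlinarith) hM).ne'
  have hfold := integral_comp_abs (f := fun t ↦ t ^ (-s) * ((p + q * t ^ 2) / (1 + t ^ 2) ^ 3))
  simp only [sq_abs] at hfold
  have hsplit : ∫ t in Set.Ioi (0 : ℝ), t ^ (-s) * ((p + q * t ^ 2) / (1 + t ^ 2) ^ 3) =
      ∫ t in Set.Ioi (0 : ℝ),
        (p * (t ^ (-s) / (1 + t ^ 2) ^ 3) + q * (t ^ (2 - s) / (1 + t ^ 2) ^ 3)) := by
    refine setIntegral_congr_fun measurableSet_Ioi fun t (ht : 0 < t) ↦ ?_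
    rw [sub_eq_add_neg, rpow_add ht, rpow_two]
    ring
  rw [hfold, hsplit, integral_add (hp_int.const_mul p) (hq_int.const_mul q), integral_const_mul,
    integral_const_mul, hp, hq]
  ring

lemma rieszPotential_of_abs_lt_one (hs : -1 < s) (hs' : s < 1) (hy : |y| < 1) :
    rieszPotential s y = (1 + s) / 2 * (π / cos (s * π / 2)) * (1 - s * y ^ 2) := by
  have hnonneg : 0 ≤ fun t ↦ |t| ^ (-s) * (chordHeight y t ^ 3 / √(1 - y ^ 2 + t ^ 2)) :=
    fun t ↦ mul_nonneg (by positivity)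
      (div_nonneg (pow_nonneg (chordHeight_pos hy t).le 3) (sqrt_nonneg _))
  have hmeas : Measurable fun t ↦ |t| ^ (-s) * (chordHeight y t ^ 3 / √(1 - y ^ 2 + t ^ 2)) := by
    unfold chordHeight
    fun_prop
  have hsymm := integral_add_comp_neg_of_nonneg hmeas.aestronglyMeasurable hnonneg
  simp only [abs_neg, ← mul_add, chordHeight_pow_three_add_neg hy] at hsymm
  have hrational := integral_abs_rpow_neg_mul_div_one_add_sq_pow_three hs hs'
    (2 * (1 - y ^ 2)) (2 * (1 + 3 * y ^ 2))
  simp only [mul_assoc (2 : ℝ), ← mul_add (2 : ℝ)] at hrational hsymm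
  rw [rieszPotential_eq_integral_chordHeight hy]
  linear_combination (hrational - hsymm) / 2

lemma rieszPotential_one (hs : -1 < s) (hs' : s < 1) :
    rieszPotential s 1 = (1 + s) / 2 * (π / cos (s * π / 2)) * (1 - s) := by
  have h := integral_one_sub_rpow_mul_one_sub_sq_rpow (a := (1 + s) / 2) (b := -s)
    (by linarith) (by linarith)
  rw [show 2 * ((1 + s) / 2) + -s + 1 = 2 by ring, show (1 + s) / 2 + 1 = (3 + s) / 2 by ring,
    show (1 + s) / 2 + -s + 1 = (3 - s) / 2 by ring, beta_three_add_half_three_sub_half hs hs',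
    rpow_two] at h
  have hnorm : rieszPotential s 1 =
      ∫ x in (-1 : ℝ)..1, (1 - x) ^ (-s) * (1 - x ^ 2) ^ ((1 + s) / 2) := by
    refine intervalIntegral.integral_congr_Ioo_of_le (by norm_num) fun x hx ↦ ?_
    rw [abs_of_pos (sub_pos.2 hx.2)]
  rw [hnorm, h]
  ring

lemma integral_one_sub_rpow_neg_sub_one_mul (hs : -1 < s) (hs' : s < 1) :
    ∫ x in (-1 : ℝ)..1, (1 - x) ^ (-s - 1) * (1 - x ^ 2) ^ ((1 + s) / 2) =
      (1 + s) * (π / cos (s * π / 2)) := by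
  have h := integral_one_sub_rpow_mul_one_sub_sq_rpow (a := (1 + s) / 2) (b := -s - 1)
    (by linarith) (by linarith)
  rw [show 2 * ((1 + s) / 2) + (-s - 1) + 1 = 1 by ring,
    show (1 + s) / 2 + 1 = (3 + s) / 2 by ring,
    show (1 + s) / 2 + (-s - 1) + 1 = (1 - s) / 2 by ring, beta_three_add_half_one_sub_half hs,
    rpow_one] at h
  rw [h]
  ring

lemma rieszPotential_of_abs_le_one (hs : -1 < s) (hs' : s < 1) (hy : |y| ≤ 1) :
    rieszPotential s y = (1 + s) / 2 * (π / cos (s * π / 2)) * (1 - s * y ^ 2) := by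
  rcases hy.lt_or_eq with hlt | heq
  · exact rieszPotential_of_abs_lt_one hs hs' hlt
  · rw [← rieszPotential_abs, heq, rieszPotential_one hs hs', ← sq_abs, heq, one_pow, mul_one]

lemma continuous_one_sub_sq_rpow {a : ℝ} (ha : 0 ≤ a) : Continuous fun x : ℝ ↦ (1 - x ^ 2) ^ a :=
  (by fun_prop : Continuous fun x : ℝ ↦ 1 - x ^ 2).rpow_const fun _ ↦ .inr ha

lemma intervalIntegrable_abs_sub_rpow_mul {r a : ℝ} (hr : -1 < r) (ha : 0 ≤ a) (y : ℝ) :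
    IntervalIntegrable (fun x ↦ |y - x| ^ r * (1 - x ^ 2) ^ a) volume (-1) 1 :=
  (intervalIntegrable_abs_sub_rpow hr y (-1) 1).mul_continuousOn
    (continuous_one_sub_sq_rpow ha).continuousOn

lemma tangent_le_rieszPotential (hs : 0 ≤ s) (hs' : s < 1) (hy : 1 < y) :
    (1 + s) / 2 * (π / cos (s * π / 2)) * (1 - s - 2 * s * (y - 1)) ≤ rieszPotential s y := by
  have hV := integral_one_sub_rpow_neg_sub_one_mul (by linarith) hs'
  have hV_int : IntervalIntegrable
      (fun x : ℝ ↦ (1 - x) ^ (-s - 1) * (1 - x ^ 2) ^ ((1 + s) / 2)) volume (-1) 1 := by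
    refine intervalIntegral.intervalIntegrable_of_integral_ne_zero (hV ▸ ?_)
    have := cos_mul_pi_div_two_pos (s := s) (by linarith) hs'
    positivity
  have hU_int (z : ℝ) := intervalIntegrable_abs_sub_rpow_mul (r := -s) (a := (1 + s) / 2)
    (by linarith) (by linarith) z
  calc (1 + s) / 2 * (π / cos (s * π / 2)) * (1 - s - 2 * s * (y - 1))
      = rieszPotential s 1 - s * (y - 1) *
          ∫ x in (-1 : ℝ)..1, (1 - x) ^ (-s - 1) * (1 - x ^ 2) ^ ((1 + s) / 2) := by
        rw [rieszPotential_one (by linarith) hs', hV]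
        ring
    _ = ∫ x in (-1 : ℝ)..1, (|1 - x| ^ (-s) * (1 - x ^ 2) ^ ((1 + s) / 2) -
          s * (y - 1) * ((1 - x) ^ (-s - 1) * (1 - x ^ 2) ^ ((1 + s) / 2))) := by
        rw [intervalIntegral.integral_sub (hU_int 1) (hV_int.const_mul _),
          intervalIntegral.integral_const_mul, rieszPotential]
    _ ≤ rieszPotential s y := by
        refine intervalIntegral.integral_mono_on_of_le_Ioo (by norm_num)
          ((hU_int 1).sub (hV_int.const_mul _)) (hU_int y) fun x hx ↦ ?_
        have hx' : 0 < 1 - x := sub_pos.2 hx.2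
        have hw : 0 ≤ (1 - x ^ 2) ^ ((1 + s) / 2) := rpow_nonneg (by nlinarith [hx.1]) _
        have htangent := rpow_neg_sub_le_rpow_neg_add hs hx' (sub_pos.2 hy).le
        rw [show 1 - x + (y - 1) = y - x by ring] at htangent
        rw [abs_of_pos hx', abs_of_pos (by linarith : 0 < y - x), ← mul_assoc, ← sub_mul]
        exact mul_le_mul_of_nonneg_right htangent hw

lemma lt_rieszPotential_of_one_lt_abs (hs : 0 < s) (hs' : s < 1) (hy : 1 < |y|) :
    (1 + s) / 2 * (π / cos (s * π / 2)) * (1 - s * y ^ 2) < rieszPotential s y := by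
  have hcos := cos_mul_pi_div_two_pos (s := s) (by linarith) hs'
  rw [← rieszPotential_abs]
  refine lt_of_lt_of_le (mul_lt_mul_of_pos_left ?_ (by positivity))
    (tangent_le_rieszPotential hs.le hs' hy)
  rw [← sq_abs]
  nlinarith [mul_pos hs (pow_pos (sub_pos.2 hy) 2)]

lemma integral_sub_sq_mul_one_sub_sq_rpow {a : ℝ} (ha : -1 < a) (y : ℝ) :
    ∫ x in (-1 : ℝ)..1, (y - x) ^ 2 * (1 - x ^ 2) ^ a =
      y ^ 2 * beta (1 / 2) (a + 1) + ∫ x in (-1 : ℝ)..1, x ^ 2 * (1 - x ^ 2) ^ a := by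
  have hmass := integral_one_sub_sq_rpow ha
  have hw : IntervalIntegrable (fun x : ℝ ↦ (1 - x ^ 2) ^ a) volume (-1) 1 :=
    intervalIntegral.intervalIntegrable_of_integral_ne_zero
      (hmass ▸ (beta_pos (by norm_num) (by linarith)).ne')
  rw [integral_sub_sq_mul_of_even hw (fun x ↦ by simp), hmass]

lemma integral_abs_sub_rpow_add_sq_mul (hs : -1 < s) (hs' : s < 1) {R : ℝ} (hR : 0 < R) (y : ℝ) :
    ∫ x, (|R * y - x| ^ (-s) + |R * y - x| ^ 2) * max (R ^ 2 - x ^ 2) 0 ^ ((1 + s) / 2) =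
      R ^ (s + 2) * (R ^ (-s) * rieszPotential s y +
        R ^ 2 * (y ^ 2 * beta (1 / 2) ((3 + s) / 2) +
          ∫ x in (-1 : ℝ)..1, x ^ 2 * (1 - x ^ 2) ^ ((1 + s) / 2))) := by
  have hsing : IntervalIntegrable (fun x ↦ |y - x| ^ (-s) * (1 - x ^ 2) ^ ((1 + s) / 2))
      volume (-1) 1 := intervalIntegrable_abs_sub_rpow_mul (by linarith) (by linarith) y
  have hquad : IntervalIntegrable (fun x ↦ (y - x) ^ 2 * (1 - x ^ 2) ^ ((1 + s) / 2))
      volume (-1) 1 := ((continuous_one_sub_sq_rpow (by linarith)).intervalIntegrable _ _)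
        |>.continuousOn_mul (by fun_prop)
  rw [integral_mul_max_sq_sub_sq_rpow _ hR (by linarith),
    show 2 * ((1 + s) / 2) + 1 = s + 2 by ring, rieszPotential,
    show (3 + s) / 2 = (1 + s) / 2 + 1 by ring,
    ← integral_sub_sq_mul_one_sub_sq_rpow (by linarith),
    ← intervalIntegral.integral_const_mul (R ^ (-s)),
    ← intervalIntegral.integral_const_mul (R ^ 2),
    ← intervalIntegral.integral_add (hsing.const_mul _) (hquad.const_mul _)]
  congr 2
  ext x
  rw [← mul_sub, abs_mul, abs_of_pos hR, mul_rpow hR.le (abs_nonneg _), mul_pow, sq_abs]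
  ring

end RieszPotential

section EquilibriumDensity

open ProbabilityTheory (beta beta_pos)

/-- The constant `𝒞_s`, the reciprocal of the coefficient of `-y ^ 2` in `rieszPotential s y`. -/
noncomputable def rieszConst (s : ℝ) : ℝ :=
  2 * cos (s * π / 2) / (s * (s + 1) * π)

/-- The radius `R₁` of the support of `ρ₁`. -/
noncomputable def supportRadius (s : ℝ) : ℝ :=
  (rieszConst s * beta (1 / 2) ((3 + s) / 2)) ^ (-(1 / (s + 2)))

variable {s y : ℝ}

lemma rieszConst_pos (hs : 0 < s) (hs' : s < 1) : 0 < rieszConst s := by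
  have := cos_mul_pi_div_two_pos (s := s) (by linarith) hs'
  unfold rieszConst
  positivity

lemma rieszConst_mul_rieszPotential (hs : 0 < s) (hs' : s < 1) (hy : |y| ≤ 1) :
    rieszConst s * rieszPotential s y = 1 / s - y ^ 2 := by
  have := cos_mul_pi_div_two_pos (s := s) (by linarith) hs'
  rw [rieszPotential_of_abs_le_one (by linarith) hs' hy, rieszConst]
  field_simp
  ring

lemma lt_rieszConst_mul_rieszPotential (hs : 0 < s) (hs' : s < 1) (hy : 1 < |y|) :
    1 / s - y ^ 2 < rieszConst s * rieszPotential s y := by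
  have := cos_mul_pi_div_two_pos (s := s) (by linarith) hs'
  calc 1 / s - y ^ 2
      = rieszConst s * ((1 + s) / 2 * (π / cos (s * π / 2)) * (1 - s * y ^ 2)) := by
        rw [rieszConst]
        field_simp
        ring
    _ < rieszConst s * rieszPotential s y :=
        mul_lt_mul_of_pos_left (lt_rieszPotential_of_one_lt_abs hs hs' hy) (rieszConst_pos hs hs')

lemma beta_one_half_three_add_half_pos (hs : -3 < s) : 0 < beta (1 / 2) ((3 + s) / 2) :=
  beta_pos (by norm_num) (by linarith)

lemma supportRadius_pos (hs : 0 < s) (hs' : s < 1) : 0 < supportRadius s :=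
  rpow_pos_of_pos
    (mul_pos (rieszConst_pos hs hs') (beta_one_half_three_add_half_pos (by linarith))) _

-- This identity says that the total mass of `ρ₁` is one.
lemma supportRadius_rpow_mul (hs : 0 < s) (hs' : s < 1) :
    supportRadius s ^ (s + 2) * (rieszConst s * beta (1 / 2) ((3 + s) / 2)) = 1 := by
  have hpos := mul_pos (rieszConst_pos hs hs')
    (beta_one_half_three_add_half_pos (s := s) (by linarith))
  rw [supportRadius, ← rpow_mul hpos.le, neg_mul, one_div_mul_cancel (by linarith), rpow_neg_one,
    inv_mul_cancel₀ hpos.ne']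

lemma potential_supportRadius_mul (hs : 0 < s) (hs' : s < 1) (y : ℝ) :
    ∫ x, (|supportRadius s * y - x| ^ (-s) + |supportRadius s * y - x| ^ 2) *
        (rieszConst s * max (supportRadius s ^ 2 - x ^ 2) 0 ^ ((1 + s) / 2)) =
      supportRadius s ^ 2 * (rieszConst s * rieszPotential s y + y ^ 2 +
        (∫ x in (-1 : ℝ)..1, x ^ 2 * (1 - x ^ 2) ^ ((1 + s) / 2)) /
          beta (1 / 2) ((3 + s) / 2)) := by
  have hR := supportRadius_pos hs hs'
  have hB := beta_one_half_three_add_half_pos (s := s) (by linarith)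
  have hnorm := supportRadius_rpow_mul hs hs'
  have hpow : supportRadius s ^ (s + 2) * supportRadius s ^ (-s) = supportRadius s ^ 2 := by
    rw [← rpow_add hR, add_neg_cancel_comm, rpow_two]
  simp only [mul_left_comm _ (rieszConst s)]
  rw [integral_const_mul, integral_abs_sub_rpow_add_sq_mul (by linarith) hs' hR]
  field_simp
  linear_combination rieszConst s * rieszPotential s y * beta (1 / 2) ((3 + s) / 2) * hpow +
    supportRadius s ^ 2 * (y ^ 2 * beta (1 / 2) ((3 + s) / 2) +
      ∫ x in (-1 : ℝ)..1, x ^ 2 * (1 - x ^ 2) ^ ((1 + s) / 2)) * hnorm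

end EquilibriumDensity

theorem rho1_euler_lagrange (s : ℝ) (hs0 : 0 < s) (hs1 : s < 1) :
    ∀ (Cs R₁ C₁ : ℝ) (ρ₁ P : ℝ → ℝ),
      Cs = 2 * Real.cos (s * π / 2) / (s * (s + 1) * π) →
      R₁ = (Cs * (Real.Gamma (1/2) * Real.Gamma ((3 + s)/2) /
            Real.Gamma (1/2 + (3 + s)/2))) ^ (-(1 / (s + 2))) →
      C₁ = Cs →
      (∀ x, ρ₁ x = C₁ * (max (R₁ ^ 2 - x ^ 2) 0) ^ ((1 + s) / 2)) →
      (∀ y, P y = ∫ x, (|y - x| ^ (-s) + |y - x| ^ 2) * ρ₁ x) →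
      ∃ K : ℝ, (∀ y : ℝ, |y| ≤ R₁ → P y = K) ∧ (∀ y : ℝ, R₁ < |y| → K < P y) := by
  intro Cs R₁ C₁ ρ₁ P hCs hR₁ hC₁ hρ₁ hP
  obtain rfl : Cs = rieszConst s := hCs
  obtain rfl : R₁ = supportRadius s := hR₁
  have hR := supportRadius_pos hs0 hs1
  obtain ⟨m, hpotential⟩ : ∃ m, ∀ y, P y = supportRadius s ^ 2 *
      (rieszConst s * rieszPotential s (y / supportRadius s) + (y / supportRadius s) ^ 2 + m) :=
    ⟨_, fun y ↦ by
      rw [← potential_supportRadius_mul hs0 hs1, mul_div_cancel₀ _ hR.ne', hP]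
      simp only [hρ₁, hC₁]⟩
  refine ⟨supportRadius s ^ 2 * (1 / s + m), fun y hy ↦ ?_, fun y hy ↦ ?_⟩
  · have hy' : |y / supportRadius s| ≤ 1 := by rwa [abs_div, abs_of_pos hR, div_le_one hR]
    rw [hpotential, rieszConst_mul_rieszPotential hs0 hs1 hy', sub_add_cancel]
  · have hy' : 1 < |y / supportRadius s| := by rwa [abs_div, abs_of_pos hR, one_lt_div hR]
    have hlt := lt_rieszConst_mul_rieszPotential hs0 hs1 hy'
    rw [hpotential]
    gcongr
    linarith
end
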